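/- For every n ≥ 1, the number of labeled planar binary trees with n leaves avoiding the single pattern y(*, x(*,*)) equals (1/n)·binom(3n − 2, n − 1) = (3n − 2)!/(n!·(2n − 1)!). -/

import Mathlib

/-- Planar binary trees with internal vertices labeled by one of two symbols `x`, `y`. -/
inductive LTree : Type
  | leaf : LTree
  | x : LTree → LTree → LTree
  | y : LTree → LTree → LTree

namespace LTree

/-- Number of leaves. -/
def leaves : LTree → ℕ
  | leaf => 1
  | x u v => u.leaves + v.leaves
  | y u v => u.leaves + v.leaves

/-- The subtree relation. -/
inductive Subtree : LTree → LTree → Prop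
  | refl (t : LTree) : Subtree t t
  | xl {s u v : LTree} : Subtree s u → Subtree s (x u v)
  | xr {s u v : LTree} : Subtree s v → Subtree s (x u v)
  | yl {s u v : LTree} : Subtree s u → Subtree s (y u v)
  | yr {s u v : LTree} : Subtree s v → Subtree s (y u v)

/-- A tree matches (at the root) the single forbidden pattern `y(*, x(*,*))`
of the L-operad of Leroux. -/
def IsBadL : LTree → Prop
  | y _ (x _ _) => True
  | _ => False

/-- A tree avoids the single pattern `y(*, x(*,*))`. -/
def AvoidsL (t : LTree) : Prop := ∀ s : LTree, Subtree s t → ¬ IsBadL s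

end LTree

namespace LTree

/-- The root is labeled by `x`. -/
def rootX : LTree → Prop
  | x _ _ => True
  | _ => False

lemma avoids_leaf : AvoidsL leaf := by
  intro s hs
  cases hs
  simp [IsBadL]

lemma avoids_x (u v : LTree) : AvoidsL (x u v) ↔ AvoidsL u ∧ AvoidsL v := by
  constructor
  · intro h
    exact ⟨fun s hs => h s (.xl hs), fun s hs => h s (.xr hs)⟩
  · rintro ⟨h1, h2⟩ s hs
    cases hs with
    | refl => simp [IsBadL]
    | xl h => exact h1 s h
    | xr h => exact h2 s h

lemma avoids_y (u v : LTree) :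
    AvoidsL (y u v) ↔ AvoidsL u ∧ AvoidsL v ∧ ¬ rootX v := by
  constructor
  · intro h
    refine ⟨fun s hs => h s (.yl hs), fun s hs => h s (.yr hs), ?_⟩
    have := h _ (.refl _)
    cases v <;> simp_all [IsBadL, rootX]
  · rintro ⟨h1, h2, h3⟩ s hs
    cases hs with
    | refl => cases v <;> simp_all [IsBadL, rootX]
    | yl h => exact h1 s h
    | yr h => exact h2 s h

lemma leaves_pos (t : LTree) : 0 < t.leaves := by
  induction t <;> simp [leaves] <;> omega

lemma finite_le (n : ℕ) : {t : LTree | t.leaves ≤ n}.Finite := by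
  induction n with
  | zero =>
    convert Set.finite_empty
    ext t
    have := leaves_pos t
    simp; omega
  | succ n ih =>
    refine (((Set.finite_singleton leaf).union (ih.image2 x ih)).union (ih.image2 y ih)).subset ?_
    intro t ht
    cases t with
    | leaf => simp
    | x u v =>
      have := leaves_pos u
      have := leaves_pos v
      simp [leaves] at ht ⊢
      omega
    | y u v =>
      have := leaves_pos u
      have := leaves_pos v
      simp [leaves] at ht ⊢
      omega

lemma finite_F (n : ℕ) : {t : LTree | t.leaves = n ∧ AvoidsL t}.Finite :=
  (finite_le n).subset fun _ h => h.1.le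

lemma finite_G (n : ℕ) : {t : LTree | t.leaves = n ∧ AvoidsL t ∧ ¬ rootX t}.Finite :=
  (finite_le n).subset fun _ h => h.1.le

/-- avoiding trees with `n` leaves -/
noncomputable def FF (n : ℕ) : Finset LTree := (finite_F n).toFinset

/-- avoiding trees with `n` leaves whose root is not `x` -/
noncomputable def GG (n : ℕ) : Finset LTree := (finite_G n).toFinset

lemma mem_FF {n : ℕ} {t : LTree} : t ∈ FF n ↔ t.leaves = n ∧ AvoidsL t := by simp [FF]
lemma mem_GG {n : ℕ} {t : LTree} : t ∈ GG n ↔ t.leaves = n ∧ AvoidsL t ∧ ¬ rootX t := by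
  simp [GG]

lemma card_xpart (n : ℕ) (S : Finset LTree)
    (hS : ∀ t, t ∈ S ↔ t.leaves = n ∧ AvoidsL t ∧ rootX t) :
    S.card = ∑ p ∈ Finset.HasAntidiagonal.antidiagonal n, (FF p.1).card * (FF p.2).card := by
  simp_rw [← Finset.card_product]
  rw [← Finset.card_sigma]
  symm
  refine Finset.card_bij (fun q _ => x q.2.1 q.2.2) ?_ ?_ ?_
  · rintro ⟨⟨i, j⟩, u, v⟩ h
    simp only [Finset.mem_sigma, Finset.HasAntidiagonal.mem_antidiagonal, Finset.mem_product, mem_FF] at h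
    rw [hS, avoids_x]
    simp [leaves, rootX]
    grind
  · rintro ⟨⟨i, j⟩, u, v⟩ h ⟨⟨i', j'⟩, u', v'⟩ h' e
    simp only [Finset.mem_sigma, Finset.HasAntidiagonal.mem_antidiagonal, Finset.mem_product, mem_FF] at h h'
    simp only [x.injEq] at e
    obtain ⟨rfl, rfl⟩ := e
    obtain ⟨-, ⟨rfl, -⟩, ⟨rfl, -⟩⟩ := h
    obtain ⟨-, ⟨rfl, -⟩, ⟨rfl, -⟩⟩ := h'
    rfl
  · intro t ht
    rw [hS] at ht
    cases t with
    | leaf => simp [rootX] at ht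
    | y u v => simp [rootX] at ht
    | x u v =>
      rw [avoids_x] at ht
      refine ⟨⟨(u.leaves, v.leaves), u, v⟩, ?_, rfl⟩
      simp only [Finset.mem_sigma, Finset.HasAntidiagonal.mem_antidiagonal, Finset.mem_product, mem_FF]
      simp only [leaves] at ht
      grind

lemma card_ypart (n : ℕ) (S : Finset LTree)
    (hS : ∀ t, t ∈ S ↔ (t.leaves = n ∧ AvoidsL t ∧ ¬ rootX t) ∧ t ≠ leaf) :
    S.card = ∑ p ∈ Finset.HasAntidiagonal.antidiagonal n, (FF p.1).card * (GG p.2).card := by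
  simp_rw [← Finset.card_product]
  rw [← Finset.card_sigma]
  symm
  refine Finset.card_bij (fun q _ => y q.2.1 q.2.2) ?_ ?_ ?_
  · rintro ⟨⟨i, j⟩, u, v⟩ h
    simp only [Finset.mem_sigma, Finset.HasAntidiagonal.mem_antidiagonal, Finset.mem_product, mem_FF, mem_GG] at h
    rw [hS, avoids_y]
    obtain ⟨h0, ⟨h1, h2⟩, h3, h4, h5⟩ := h
    refine ⟨⟨?_, ⟨h2, h4, h5⟩, fun h => h⟩, fun h => by cases h⟩
    simp only [leaves]
    omega
  · rintro ⟨⟨i, j⟩, u, v⟩ h ⟨⟨i', j'⟩, u', v'⟩ h' e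
    simp only [Finset.mem_sigma, Finset.HasAntidiagonal.mem_antidiagonal, Finset.mem_product, mem_FF,
      mem_GG] at h h'
    simp only [y.injEq] at e
    obtain ⟨rfl, rfl⟩ := e
    obtain ⟨-, ⟨rfl, -⟩, ⟨rfl, -⟩⟩ := h
    obtain ⟨-, ⟨rfl, -⟩, ⟨rfl, -⟩⟩ := h'
    rfl
  · intro t ht
    rw [hS] at ht
    cases t with
    | leaf => simp at ht
    | x u v => simp [rootX] at ht
    | y u v =>
      rw [avoids_y] at ht
      refine ⟨⟨(u.leaves, v.leaves), u, v⟩, ?_, rfl⟩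
      simp only [Finset.mem_sigma, Finset.HasAntidiagonal.mem_antidiagonal, Finset.mem_product, mem_FF, mem_GG]
      simp only [leaves] at ht
      grind

lemma card_FF (n : ℕ) : (FF n).card =
    (GG n).card + ∑ p ∈ Finset.HasAntidiagonal.antidiagonal n, (FF p.1).card * (FF p.2).card := by
  classical
  rw [← card_xpart n ((FF n).filter rootX) (by intro t; simp [mem_FF, and_assoc])]
  have : GG n = (FF n).filter (fun t => ¬ rootX t) := by
    ext t; simp [mem_FF, mem_GG, and_assoc]
  rw [this, add_comm, Finset.card_filter_add_card_filter_not]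

lemma card_GG (n : ℕ) : (GG n).card =
    (if n = 1 then 1 else 0) +
      ∑ p ∈ Finset.HasAntidiagonal.antidiagonal n, (FF p.1).card * (GG p.2).card := by
  classical
  rw [← card_ypart n ((GG n).filter (· ≠ leaf)) (by intro t; simp [mem_GG])]
  rw [← Finset.card_filter_add_card_filter_not (s := GG n) (fun t => t = leaf)]
  congr 1
  split_ifs with h
  · subst h
    rw [Finset.card_eq_one]
    refine ⟨leaf, ?_⟩
    ext t
    simp only [Finset.mem_filter, mem_GG, Finset.mem_singleton]
    constructor
    · exact fun h => h.2
    · rintro rfl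
      exact ⟨⟨rfl, avoids_leaf, by simp [rootX]⟩, rfl⟩
  · rw [Finset.card_eq_zero]
    ext t
    simp only [Finset.mem_filter, mem_GG, Finset.notMem_empty, iff_false]
    rintro ⟨⟨h1, -⟩, rfl⟩
    exact h h1.symm

open PowerSeries in
lemma coeff_pow_H (H : PowerSeries ℚ) (hH : H = 1 + X * H ^ 3) (m : ℕ) :
    ∀ r : ℕ, (3 * m + r : ℚ) * coeff m (H ^ r) = r * ((3 * m + r).choose m : ℚ) := by
  have h0 : constantCoeff H = 1 := by
    rw [hH]; simp
  induction m with
  | zero =>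
    intro r
    simp [h0]
  | succ m ihm =>
    intro r
    induction r with
    | zero => simp
    | succ r ihr =>
      have e : H ^ (r + 1) = H ^ r + X * H ^ (r + 3) := by
        calc H ^ (r + 1) = H ^ r * H := pow_succ _ _
          _ = H ^ r * (1 + X * H ^ 3) := by rw [← hH]
          _ = _ := by ring
      rw [e, map_add, coeff_succ_X_mul]
      have h1 := ihm (r + 3)
      have h2 := Nat.choose_succ_right_eq (3 * m + r + 3) m
      have h3 := Nat.choose_succ_succ (3 * m + r + 3) m
      rw [show 3 * m + r + 3 - m = 2 * m + r + 3 by omega] at h2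
      rw [show 3 * (m + 1) + r = 3 * m + r + 3 by ring] at ihr
      rw [show 3 * (m + 1) + (r + 1) = (3 * m + r + 3).succ by rw [Nat.succ_eq_add_one]; ring, h3]
      rw [show 3 * m + (r + 3) = 3 * m + r + 3 by ring] at h1
      have h2' : ((3 * m + r + 3).choose (m + 1) : ℚ) * (m + 1) =
        ((3 * m + r + 3).choose m : ℚ) * (2 * m + r + 3) := by exact_mod_cast h2
      push_cast at *
      set A : ℚ := ((3 * m + r + 3).choose (m + 1) : ℚ)
      set B : ℚ := ((3 * m + r + 3).choose m : ℚ)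
      set a := coeff (m + 1) (H ^ r)
      set b := coeff m (H ^ (r + 3))
      have hN : (3 * m + r + 3 : ℚ) ≠ 0 := by positivity
      have ha : a = r * A / (3 * m + r + 3) := by
        rw [eq_div_iff hN]; linarith
      have hb : b = (r + 3) * B / (3 * m + r + 3) := by
        rw [eq_div_iff hN]; linarith
      have hm : (m + 1 : ℚ) ≠ 0 := by positivity
      have hA : A = B * (2 * m + r + 3) / (m + 1) := by
        rw [eq_div_iff hm]; linarith
      rw [ha, hb, hA]
      field_simp
      ring

open PowerSeries in
lemma card_FF_formula (m : ℕ) : (m + 1) * (FF (m + 1)).card = (3 * m + 1).choose m := by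
  let F : PowerSeries ℚ := PowerSeries.mk fun n => ((FF n).card : ℚ)
  let G : PowerSeries ℚ := PowerSeries.mk fun n => ((GG n).card : ℚ)
  have hF : F = G + F * F := by
    ext n
    simp only [F, G, map_add, coeff_mul, coeff_mk]
    exact_mod_cast card_FF n
  have hG : G = X + F * G := by
    ext n
    simp only [F, G, map_add, coeff_mul, coeff_mk, coeff_X]
    exact_mod_cast card_GG n
  have hc : constantCoeff (1 - F) ≠ 0 := by
    have : FF 0 = ∅ := by
      ext t
      have := leaves_pos t
      simp [mem_FF]
      omega
    have h0 : constantCoeff F = 0 := by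
      rw [← coeff_zero_eq_constantCoeff_apply, coeff_mk, this]
      simp
    rw [map_sub, h0]
    simp
  let H := (1 - F)⁻¹
  have h1 : (1 - F) * H = 1 := PowerSeries.mul_inv_cancel _ hc
  have hGH : G = X * H := by linear_combination (-G) * h1 + H * hG
  have hFH : F = X * H ^ 2 := by linear_combination (-F) * h1 + H * hF + H * hGH
  have hH : H = 1 + X * H ^ 3 := by linear_combination h1 + H * hFH
  have key := coeff_pow_H H hH m 2
  have hf : coeff m (H ^ 2) = ((FF (m + 1)).card : ℚ) := by
    rw [← coeff_succ_X_mul, ← hFH]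
    simp [F]
  rw [hf] at key
  have h2 := Nat.choose_mul_succ_eq (3 * m + 1) m
  rw [show 3 * m + 1 + 1 - m = 2 * m + 2 by omega] at h2
  have h2' : ((3 * m + 1).choose m : ℚ) * (3 * m + 2) =
      ((3 * m + 2).choose m : ℚ) * (2 * m + 2) := by exact_mod_cast h2
  have hN : (3 * m + 2 : ℚ) ≠ 0 := by positivity
  have : ((m + 1 : ℚ) * (FF (m + 1)).card) = (3 * m + 1).choose m := by
    apply mul_left_cancel₀ hN
    push_cast at key
    linear_combination (m + 1 : ℚ) * key - h2'
  exact_mod_cast this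

end LTree

open LTree in
/-- For every `n ≥ 1`, the number of labeled planar binary trees with `n` leaves
avoiding the single pattern `y(*, x(*,*))` (the dimension of the `n`-th component of
the L-operad of Leroux) equals `(1/n)·C(3n-2, n-1) = (3n-2)! / (n! (2n-1)!)`;
in particular `n` divides `C(3n-2, n-1)`. -/
theorem L_operad_dim :
    ∀ n : ℕ, 1 ≤ n →
      n ∣ (3 * n - 2).choose (n - 1) ∧
      Nat.card {t : LTree // t.leaves = n ∧ AvoidsL t} =
        (3 * n - 2).choose (n - 1) / n := by
  intro n hn
  obtain ⟨m, rfl⟩ : ∃ m, n = m + 1 := ⟨n - 1, by omega⟩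
  have h := card_FF_formula m
  have hc : Nat.card {t : LTree // t.leaves = m + 1 ∧ AvoidsL t} = (FF (m + 1)).card := by
    exact Nat.subtype_card _ (fun t => mem_FF)
  rw [show 3 * (m + 1) - 2 = 3 * m + 1 by omega, Nat.add_sub_cancel, ← h, hc]
  exact ⟨Dvd.intro _ rfl, (Nat.mul_div_cancel_left _ (Nat.succ_pos m)).symm⟩
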